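/- L² Carleman estimate with weight e^{τ√|x|} (the ε → 0 endpoint of the paper's family of weights): Let n ≥ 2 and let V satisfy Assumption A1 with τ0 < 1/2. There exist τ̄ ≥ 1 and C > 0 (depending on n, V) such that for every τ ≥ τ̄ and every smooth compactly supported u : ℝ^n → ℂ with supp u ⊆ {x : |x| > 1}, setting ρ_τ(x) := ( τ|x|^{−3/2} + (τ³/2)|x|^{−5/2} )^{1/4}, one has ∫ e^{4τ(√|x|−1)} ρ_τ(x)² |u(x)|² dx + ∫ ( √|x| / (τ + √|x|) )² e^{4τ(√|x|−1)} ρ_τ(x)² |∇u(x)|² dx ≤ C ∫ e^{4τ(√|x|−1)} ρ_τ(x)^{−2} |Δu(x) + V(x)u(x)|² dx. -/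

import Mathlib

open MeasureTheory Filter
open scoped ENNReal Topology BigOperators

noncomputable section

abbrev Euc (n : ℕ) := EuclideanSpace ℝ (Fin n)

/-- The `i`-th partial derivative. -/
def pd {n : ℕ} (i : Fin n) (φ : Euc n → ℂ) (x : Euc n) : ℂ :=
  fderiv ℝ φ x (EuclideanSpace.single i 1)

/-- The Laplacian. -/
def lap {n : ℕ} (φ : Euc n → ℂ) (x : Euc n) : ℂ :=
  ∑ i : Fin n, pd i (pd i φ) x

/-- Assumption A1 on the long range potential `V`, with
`τ0 = -liminf_{|x|→∞} x·∇V(x)/(4V(x))`. -/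
def SatA1 {n : ℕ} (V : Euc n → ℝ) (τ0 : ℝ) : Prop :=
  ContDiff ℝ 2 V ∧
  (∃ M : ℝ, ∀ x : Euc n, |V x| ≤ M ∧
      Real.sqrt (1 + ‖x‖ ^ 2) * ‖fderiv ℝ V x‖ ≤ M ∧
      (1 + ‖x‖ ^ 2) * ‖iteratedFDeriv ℝ 2 V x‖ ≤ M) ∧
  (∃ c : ℝ, 0 < c ∧ ∀ᶠ x in cocompact (Euc n), c ≤ V x) ∧
  τ0 = - Filter.liminf (fun x : Euc n => fderiv ℝ V x x / (4 * V x)) (cocompact (Euc n))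

/-- The dyadic annulus `{x : 2^j ≤ |x| ≤ 2^{j+1}}`. -/
def Ann (n : ℕ) (j : ℕ) : Set (Euc n) :=
  {x : Euc n | (2 : ℝ) ^ j ≤ ‖x‖ ∧ ‖x‖ ≤ (2 : ℝ) ^ (j + 1)}

/-- The exponent `(n+1)/2`. -/
def pX (n : ℕ) : ℝ≥0∞ := ENNReal.ofReal ((n + 1 : ℝ) / 2)

/-- The weight `ρ_τ(x) = (τ|x|^{-3/2} + (τ³/2)|x|^{-5/2})^{1/4}` associated to
the Carleman weight `h(ln|x|) = 2τ(√|x| - 1)`. -/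
def rhoSqrt {n : ℕ} (τ : ℝ) (x : Euc n) : ℝ :=
  (τ * ‖x‖ ^ (-(3 : ℝ) / 2) + τ ^ 3 / 2 * ‖x‖ ^ (-(5 : ℝ) / 2)) ^ ((1 : ℝ) / 4)


/-! ### Real partial derivatives -/

/-- Real `i`-th partial derivative. -/
def dd {n : ℕ} (i : Fin n) (f : Euc n → ℝ) (x : Euc n) : ℝ :=
  fderiv ℝ f x (EuclideanSpace.single i 1)

lemma dd_mul {n : ℕ} (i : Fin n) {f g : Euc n → ℝ} {x : Euc n}
    (hf : DifferentiableAt ℝ f x) (hg : DifferentiableAt ℝ g x) :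
    dd i (fun y => f y * g y) x = dd i f x * g x + f x * dd i g x := by
  unfold dd
  rw [fderiv_fun_mul hf hg]
  simp
  ring

lemma dd_add {n : ℕ} (i : Fin n) {f g : Euc n → ℝ} {x : Euc n}
    (hf : DifferentiableAt ℝ f x) (hg : DifferentiableAt ℝ g x) :
    dd i (fun y => f y + g y) x = dd i f x + dd i g x := by
  unfold dd
  rw [fderiv_fun_add hf hg]
  simp

lemma dd_sum {n : ℕ} (i : Fin n) {f : Fin n → Euc n → ℝ} {x : Euc n}
    (hf : ∀ j, DifferentiableAt ℝ (f j) x) :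
    dd i (fun y => ∑ j, f j y) x = ∑ j, dd i (f j) x := by
  unfold dd
  rw [fderiv_fun_sum (fun j _ => hf j)]
  simp

lemma diff_coord {n : ℕ} (j : Fin n) (x : Euc n) :
    DifferentiableAt ℝ (fun y : Euc n => y j) x := by fun_prop

lemma dd_coord {n : ℕ} (i j : Fin n) (x : Euc n) :
    dd i (fun y => y j) x = if j = i then 1 else 0 := by
  unfold dd
  have : HasFDerivAt (fun y : Euc n => y j) (EuclideanSpace.proj j : Euc n →L[ℝ] ℝ) x :=
    (EuclideanSpace.proj j : Euc n →L[ℝ] ℝ).hasFDerivAt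
  rw [this.fderiv]
  simp

lemma dd_normsq {n : ℕ} (i : Fin n) (x : Euc n) :
    dd i (fun y => ‖y‖ ^ 2) x = 2 * x i := by
  unfold dd
  rw [(hasStrictFDerivAt_norm_sq x).hasFDerivAt.fderiv]
  simp [EuclideanSpace.inner_single_right]

lemma norm_sq_sum {n : ℕ} (x : Euc n) : ‖x‖ ^ 2 = ∑ i, x i ^ 2 := by
  simp [EuclideanSpace.norm_sq_eq]

lemma hasFDerivAt_radial {n : ℕ} {κ : ℝ → ℝ} {κ' : ℝ} {x : Euc n} (hx : x ≠ 0)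
    (h : HasDerivAt κ κ' (Real.log ‖x‖)) :
    HasFDerivAt (fun y : Euc n => κ (Real.log ‖y‖))
      ((κ' / ‖x‖ ^ 2) • (innerSL ℝ x)) x := by
  have hx' : ‖x‖ ≠ 0 := by simpa using hx
  have h2 : HasFDerivAt (fun y : Euc n => Real.log ‖y‖) ((1 / ‖x‖ ^ 2) • (innerSL ℝ x)) x := by
    have h3 := ((hasStrictFDerivAt_norm_sq x).hasFDerivAt.log (by positivity)).const_mul (1 / 2 : ℝ)
    have e : (fun y : Euc n => (1 / 2 : ℝ) * Real.log (‖y‖ ^ 2)) = fun y => Real.log ‖y‖ := by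
      funext y
      rw [Real.log_pow]; push_cast; ring
    rw [e] at h3
    refine h3.congr_fderiv ?_
    ext v
    simp
    ring
  have h4 := h.comp_hasFDerivAt x h2
  refine HasFDerivAt.congr_fderiv (f := fun y : Euc n => κ (Real.log ‖y‖)) h4 ?_
  ext v
  simp
  ring

lemma dd_radial {n : ℕ} (i : Fin n) {κ : ℝ → ℝ} {κ' : ℝ} {x : Euc n} (hx : x ≠ 0)
    (h : HasDerivAt κ κ' (Real.log ‖x‖)) :
    dd i (fun y : Euc n => κ (Real.log ‖y‖)) x = κ' / ‖x‖ ^ 2 * x i := by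
  unfold dd
  rw [(hasFDerivAt_radial hx h).fderiv]
  simp [EuclideanSpace.inner_single_right]

lemma contDiffAt_radial {n : ℕ} {m : WithTop ℕ∞} {κ : ℝ → ℝ} {x : Euc n} (hx : x ≠ 0)
    (h : ContDiff ℝ m κ) : ContDiffAt ℝ m (fun y : Euc n => κ (Real.log ‖y‖)) x := by
  have hx' : ‖x‖ ≠ 0 := by simpa using hx
  exact h.contDiffAt.comp x ((contDiffAt_norm ℝ hx).log hx')

lemma contDiff_dd {n : ℕ} (i : Fin n) {f : Euc n → ℝ} (hf : ContDiff ℝ (⊤ : ℕ∞) f) :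
    ContDiff ℝ (⊤ : ℕ∞) (dd i f) := by
  unfold dd
  exact (hf.fderiv_right (m := (⊤ : ℕ∞)) (by norm_cast)).clm_apply contDiff_const

lemma dd_comm {n : ℕ} (i j : Fin n) {f : Euc n → ℝ} (hf : ContDiff ℝ (⊤ : ℕ∞) f) (x : Euc n) :
    dd i (dd j f) x = dd j (dd i f) x := by
  have hd : DifferentiableAt ℝ (fderiv ℝ f) x :=
    (hf.fderiv_right (m := (⊤ : ℕ∞)) (by norm_cast)).differentiable (by simp) x
  have hs : IsSymmSndFDerivAt ℝ f x :=
    hf.contDiffAt.isSymmSndFDerivAt (by simp; norm_cast)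
  have e : ∀ a b : Fin n, dd a (dd b f) x =
      fderiv ℝ (fderiv ℝ f) x (EuclideanSpace.single a 1) (EuclideanSpace.single b 1) := by
    intro a b
    unfold dd
    rw [fderiv_clm_apply hd (by fun_prop)]
    simp
  rw [e, e, hs.eq]

lemma dd_congr {n : ℕ} (i : Fin n) {f g : Euc n → ℝ} {x : Euc n} (h : f =ᶠ[𝓝 x] g) :
    dd i f x = dd i g x := by
  unfold dd
  rw [h.fderiv_eq]

lemma dd_zero_of {n : ℕ} (i : Fin n) {w : Euc n → ℝ} {x : Euc n}
    (h : ∀ᶠ y in 𝓝 x, w y = 0) : dd i w x = 0 := by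
  have : w =ᶠ[𝓝 x] fun _ => (0 : ℝ) := h
  rw [dd_congr i this]
  simp [dd]

/-! ### Null functions (divergences) -/

/-- Integrable with vanishing integral. -/
def Null {n : ℕ} (Z : Euc n → ℝ) : Prop := Integrable Z ∧ ∫ x, Z x = 0

lemma Null.add {n : ℕ} {Z W : Euc n → ℝ} (h : Null Z) (h' : Null W) :
    Null (fun x => Z x + W x) :=
  ⟨h.1.add h'.1, by rw [integral_add h.1 h'.1, h.2, h'.2, add_zero]⟩

lemma Null.smul {n : ℕ} {Z : Euc n → ℝ} (c : ℝ) (h : Null Z) :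
    Null (fun x => c * Z x) :=
  ⟨h.1.const_mul c, by rw [integral_const_mul, h.2, mul_zero]⟩

lemma null_dd {n : ℕ} (i : Fin n) {g : Euc n → ℝ} (hg : ContDiff ℝ 1 g)
    (hc : HasCompactSupport g) : Null (dd i g) := by
  have hcont : Continuous (dd i g) := by
    unfold dd
    exact (hg.continuous_fderiv (by norm_num)).clm_apply continuous_const
  have hcs : HasCompactSupport (dd i g) := by
    unfold dd
    exact hc.fderiv_apply ℝ _
  have hi : Integrable (dd i g) := hcont.integrable_of_hasCompactSupport hcs
  refine ⟨hi, ?_⟩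
  have := integral_mul_fderiv_eq_neg_fderiv_mul_of_integrable (𝕜 := ℝ) (μ := (volume : Measure (Euc n)))
    (f := fun _ => (1 : ℝ)) (g := g) (v := EuclideanSpace.single i 1)
    (by simp) (by simp only [one_mul]; exact hi)
    (by simpa using hg.continuous.integrable_of_hasCompactSupport hc)
    (fun x _ => by fun_prop) (fun x _ => hg.differentiable (by norm_num) x)
  simpa [dd] using this

lemma null_sum {n : ℕ} {Z : Fin n → Euc n → ℝ} (h : ∀ i, Null (Z i)) :
    Null (fun x => ∑ i, Z i x) :=
  ⟨integrable_finsetSum _ (fun i _ => (h i).1), by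
    rw [integral_finsetSum _ (fun i _ => (h i).1)]
    exact Finset.sum_eq_zero (fun i _ => (h i).2)⟩

lemma ev_zero_of_ball {n : ℕ} {w : Euc n → ℝ} (hw : ∀ x : Euc n, ‖x‖ ≤ 1 → w x = 0)
    {x : Euc n} (hx : ‖x‖ < 1) : ∀ᶠ y in 𝓝 x, w y = 0 := by
  have : ∀ᶠ y in 𝓝 x, ‖y‖ < 1 := continuous_norm.continuousAt.eventually_lt continuousAt_const hx
  filter_upwards [this] with y hy using hw y hy.le

/-- Divergences of fields which are local in `w`. -/
lemma null_div {n : ℕ} {w : Euc n → ℝ} (hwc : HasCompactSupport w)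
    (hw : ∀ x : Euc n, ‖x‖ ≤ 1 → w x = 0) {X : Fin n → Euc n → ℝ}
    (hloc : ∀ i x, (∀ᶠ y in 𝓝 x, w y = 0) → X i x = 0)
    (hX : ∀ i x, x ≠ 0 → ContDiffAt ℝ 1 (X i) x) :
    Null (fun x => ∑ i, dd i (X i) x) := by
  refine null_sum fun i => null_dd i ?_ ?_
  · rw [contDiff_iff_contDiffAt]
    intro x
    by_cases hx : x = 0
    · have h0 : ∀ᶠ y in 𝓝 x, w y = 0 := ev_zero_of_ball hw (by simp [hx])
      have : X i =ᶠ[𝓝 x] fun _ => (0 : ℝ) := by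
        filter_upwards [eventually_eventually_nhds.mpr h0] with y hy using hloc i y hy
      exact contDiffAt_const.congr_of_eventuallyEq this
    · exact hX i x hx
  · refine hwc.mono' ?_
    intro x hx
    by_contra hn
    exact hx (hloc i x (notMem_tsupport_iff_eventuallyEq.mp hn))

/-! ### Divergence identities -/

/-- Laplacian of a real function. -/
def lpl {n : ℕ} (w : Euc n → ℝ) (x : Euc n) : ℝ := ∑ i, dd i (dd i w) x
/-- The Euler field `x·∇` applied to `w`. -/
def dr {n : ℕ} (w : Euc n → ℝ) (x : Euc n) : ℝ := ∑ i, x i * dd i w x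
/-- The squared gradient. -/
def gs {n : ℕ} (w : Euc n → ℝ) (x : Euc n) : ℝ := ∑ i, dd i w x ^ 2
/-- The Hessian term `x·D²w·∇w`. -/
def Hs {n : ℕ} (w : Euc n → ℝ) (x : Euc n) : ℝ :=
  ∑ i, ∑ j, x j * dd i w x * dd i (dd j w) x

lemma diff_dd {n : ℕ} (i : Fin n) {w : Euc n → ℝ} (hw : ContDiff ℝ (⊤ : ℕ∞) w) (x : Euc n) :
    DifferentiableAt ℝ (dd i w) x := (contDiff_dd i hw).differentiable (by simp) x

lemma contDiff_dr {n : ℕ} {w : Euc n → ℝ} (hw : ContDiff ℝ (⊤ : ℕ∞) w) :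
    ContDiff ℝ (⊤ : ℕ∞) (dr w) := by
  unfold dr
  refine ContDiff.sum fun i _ => ?_
  have := contDiff_dd i hw
  exact (by fun_prop : ContDiff ℝ (⊤ : ℕ∞) (fun y : Euc n => y i)).mul this

lemma contDiff_gs {n : ℕ} {w : Euc n → ℝ} (hw : ContDiff ℝ (⊤ : ℕ∞) w) :
    ContDiff ℝ (⊤ : ℕ∞) (gs w) := by
  unfold gs
  refine ContDiff.sum fun i _ => ?_
  exact (contDiff_dd i hw).pow 2

lemma dd_dr {n : ℕ} (i : Fin n) {w : Euc n → ℝ} (hw : ContDiff ℝ (⊤ : ℕ∞) w) (x : Euc n) :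
    dd i (dr w) x = dd i w x + ∑ j, x j * dd i (dd j w) x := by
  unfold dr
  rw [dd_sum i (fun j => (diff_coord j x).fun_mul (diff_dd j hw x))]
  have : ∀ j, dd i (fun y => y j * dd j w y) x
      = (if j = i then 1 else 0) * dd j w x + x j * dd i (dd j w) x := by
    intro j
    rw [dd_mul i (diff_coord j x) (diff_dd j hw x), dd_coord]
  simp only [this, Finset.sum_add_distrib]
  simp

lemma dd_gs {n : ℕ} (i : Fin n) {w : Euc n → ℝ} (hw : ContDiff ℝ (⊤ : ℕ∞) w) (x : Euc n) :
    dd i (gs w) x = ∑ j, 2 * dd j w x * dd i (dd j w) x := by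
  unfold gs
  rw [dd_sum i (fun j => (diff_dd j hw x).fun_pow 2)]
  refine Finset.sum_congr rfl fun j _ => ?_
  have : (fun y => dd j w y ^ 2) = fun y => dd j w y * dd j w y := by funext y; ring
  rw [this, dd_mul i (diff_dd j hw x) (diff_dd j hw x)]
  ring

lemma div1 {n : ℕ} {w α : Euc n → ℝ} (hw : ContDiff ℝ (⊤ : ℕ∞) w) {x : Euc n}
    (hα : DifferentiableAt ℝ α x) {a : ℝ} (ha : ∀ i, dd i α x = a * x i) :
    ∑ i, dd i (fun y => α y * (dr w y * dd i w y)) x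
      = a * dr w x ^ 2 + α x * (gs w x + Hs w x) + α x * dr w x * lpl w x := by
  have hd := (contDiff_dr hw).differentiable (by simp) x
  have : ∀ i, dd i (fun y => α y * (dr w y * dd i w y)) x
      = a * dr w x * (x i * dd i w x) + α x * (dd i w x ^ 2)
        + α x * (∑ j, x j * dd i w x * dd i (dd j w) x)
        + α x * dr w x * dd i (dd i w) x := by
    intro i
    rw [dd_mul i hα (hd.fun_mul (diff_dd i hw x)), dd_mul i hd (diff_dd i hw x), dd_dr i hw, ha]
    have e : (∑ j, x j * dd i w x * dd i (dd j w) x)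
        = dd i w x * ∑ j, x j * dd i (dd j w) x := by
      rw [Finset.mul_sum]
      exact Finset.sum_congr rfl fun j _ => by ring
    rw [e]
    ring
  simp only [this, Finset.sum_add_distrib, ← Finset.mul_sum]
  unfold dr gs Hs lpl
  ring

lemma sum_coord_sq {n : ℕ} (x : Euc n) : ∑ i, x i * x i = ‖x‖ ^ 2 := by
  rw [norm_sq_sum]
  exact Finset.sum_congr rfl fun i _ => by ring

lemma div2 {n : ℕ} {w α : Euc n → ℝ} (hw : ContDiff ℝ (⊤ : ℕ∞) w) {x : Euc n}
    (hα : DifferentiableAt ℝ α x) {a : ℝ} (ha : ∀ i, dd i α x = a * x i) :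
    ∑ i, dd i (fun y => y i * (α y * gs w y)) x
      = (n * α x + a * ‖x‖ ^ 2) * gs w x + 2 * α x * Hs w x := by
  have hd := (contDiff_gs hw).differentiable (by simp) x
  have : ∀ i, dd i (fun y => y i * (α y * gs w y)) x
      = α x * gs w x + a * gs w x * (x i * x i)
        + 2 * α x * (∑ j, x i * dd j w x * dd j (dd i w) x) := by
    intro i
    rw [dd_mul i (diff_coord i x) (hα.fun_mul hd), dd_mul i hα hd, dd_gs i hw, ha, dd_coord]
    have e : (∑ j, x i * dd j w x * dd j (dd i w) x)
        = x i / 2 * ∑ j, 2 * dd j w x * dd i (dd j w) x := by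
      rw [Finset.mul_sum]
      exact Finset.sum_congr rfl fun j _ => by rw [dd_comm i j hw]; ring
    rw [e]
    simp
    ring
  simp only [this, Finset.sum_add_distrib, ← Finset.mul_sum, sum_coord_sq]
  rw [Finset.sum_comm]
  unfold Hs
  simp
  ring

lemma div3 {n : ℕ} {w α : Euc n → ℝ} (hw : ContDiff ℝ (⊤ : ℕ∞) w) {x : Euc n}
    (hα : DifferentiableAt ℝ α x) {a : ℝ} (ha : ∀ i, dd i α x = a * x i) :
    ∑ i, dd i (fun y => α y * (w y * dd i w y)) x
      = a * w x * dr w x + α x * gs w x + α x * w x * lpl w x := by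
  have hd := hw.differentiable (by simp) x
  have : ∀ i, dd i (fun y => α y * (w y * dd i w y)) x
      = a * w x * (x i * dd i w x) + α x * (dd i w x ^ 2) + α x * w x * dd i (dd i w) x := by
    intro i
    rw [dd_mul i hα (hd.fun_mul (diff_dd i hw x)), dd_mul i hd (diff_dd i hw x), ha]
    ring
  simp only [this, Finset.sum_add_distrib, ← Finset.mul_sum]
  unfold dr gs lpl
  ring

lemma div4 {n : ℕ} {w ε : Euc n → ℝ} (hw : ContDiff ℝ (⊤ : ℕ∞) w) {x : Euc n}
    (hε : DifferentiableAt ℝ ε x) :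
    ∑ i, dd i (fun y => y i * (ε y * (w y * w y))) x
      = (n * ε x + dr ε x) * w x ^ 2 + 2 * ε x * w x * dr w x := by
  have hd := hw.differentiable (by simp) x
  have : ∀ i, dd i (fun y => y i * (ε y * (w y * w y))) x
      = ε x * w x ^ 2 + w x ^ 2 * (x i * dd i ε x) + 2 * ε x * w x * (x i * dd i w x) := by
    intro i
    rw [dd_mul i (diff_coord i x) (hε.fun_mul (hd.fun_mul hd)), dd_mul i hε (hd.fun_mul hd),
      dd_mul i hd hd, dd_coord]
    simp
    ring
  simp only [this, Finset.sum_add_distrib, ← Finset.mul_sum]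
  unfold dr
  simp
  ring

/-! ### The integrated identities -/

lemma dd_rad2 {n : ℕ} (i : Fin n) {κ : ℝ → ℝ} {κ' : ℝ} {x : Euc n} (hx : x ≠ 0)
    (h : HasDerivAt κ κ' (Real.log ‖x‖)) :
    dd i (fun y : Euc n => κ (Real.log ‖y‖) * ‖y‖ ^ 2) x
      = (κ' + 2 * κ (Real.log ‖x‖)) * x i := by
  have hx' : ‖x‖ ≠ 0 := by simpa using hx
  rw [dd_mul i (hasFDerivAt_radial hx h).differentiableAt
    (hasStrictFDerivAt_norm_sq x).hasFDerivAt.differentiableAt, dd_radial i hx h, dd_normsq]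
  field_simp

lemma contDiffAt_rad2 {n : ℕ} {m : WithTop ℕ∞} {κ : ℝ → ℝ} {x : Euc n} (hx : x ≠ 0)
    (h : ContDiff ℝ m κ) :
    ContDiffAt ℝ m (fun y : Euc n => κ (Real.log ‖y‖) * ‖y‖ ^ 2) x :=
  (contDiffAt_radial hx h).mul (contDiff_norm_sq ℝ).contDiffAt

lemma dr_add {n : ℕ} {f g : Euc n → ℝ} {x : Euc n}
    (hf : DifferentiableAt ℝ f x) (hg : DifferentiableAt ℝ g x) :
    dr (fun y => f y + g y) x = dr f x + dr g x := by
  unfold dr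
  simp only [dd_add _ hf hg, mul_add, Finset.sum_add_distrib]

lemma dr_mul {n : ℕ} {f g : Euc n → ℝ} {x : Euc n}
    (hf : DifferentiableAt ℝ f x) (hg : DifferentiableAt ℝ g x) :
    dr (fun y => f y * g y) x = dr f x * g x + f x * dr g x := by
  unfold dr
  simp only [dd_mul _ hf hg, Finset.sum_mul, Finset.mul_sum, ← Finset.sum_add_distrib]
  exact Finset.sum_congr rfl fun i _ => by ring

lemma dr_of_rad {n : ℕ} {f : Euc n → ℝ} {x : Euc n} {a : ℝ} (h : ∀ i, dd i f x = a * x i) :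
    dr f x = a * ‖x‖ ^ 2 := by
  unfold dr
  rw [← sum_coord_sq, Finset.mul_sum]
  exact Finset.sum_congr rfl fun i _ => by rw [h]; ring

lemma dr_zero_of {n : ℕ} {w : Euc n → ℝ} {x : Euc n}
    (h : ∀ᶠ y in 𝓝 x, w y = 0) : dr w x = 0 := by
  unfold dr
  simp [dd_zero_of _ h]

lemma gs_zero_of {n : ℕ} {w : Euc n → ℝ} {x : Euc n}
    (h : ∀ᶠ y in 𝓝 x, w y = 0) : gs w x = 0 := by
  unfold gs
  simp [dd_zero_of _ h]

lemma lpl_zero_of {n : ℕ} {w : Euc n → ℝ} {x : Euc n}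
    (h : ∀ᶠ y in 𝓝 x, w y = 0) : lpl w x = 0 := by
  unfold lpl
  refine Finset.sum_eq_zero fun i _ => dd_zero_of i ?_
  filter_upwards [eventually_eventually_nhds.mpr h] with y hy using dd_zero_of i hy

/-- The energy identities: one for the conjugated operator, one for the gradient. -/
lemma energy {n : ℕ} {V w : Euc n → ℝ} (hV : ContDiff ℝ 2 V) (hw : ContDiff ℝ (⊤ : ℕ∞) w)
    (hwc : HasCompactSupport w) (hw0 : ∀ x : Euc n, ‖x‖ ≤ 1 → w x = 0)
    {κ κ1 κ2 m : ℝ → ℝ} (hκ : ContDiff ℝ 1 κ) (hκ1 : ContDiff ℝ 1 κ1) (hm : ContDiff ℝ 1 m)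
    (dκ : ∀ t, HasDerivAt κ (κ1 t) t) (dκ1 : ∀ t, HasDerivAt κ1 (κ2 t) t)
    (dm : ∀ t, HasDerivAt m (m t / 2) t) :
    ∃ ZX ZY : Euc n → ℝ, Null ZX ∧ Null ZY ∧ ∀ x : Euc n, x ≠ 0 →
      ∀ k k1 k2 q r2 Q S : ℝ, k = κ (Real.log ‖x‖) → k1 = κ1 (Real.log ‖x‖) →
      k2 = κ2 (Real.log ‖x‖) → q = m (Real.log ‖x‖) → r2 = ‖x‖ ^ 2 →
      Q = k ^ 2 + (n - 1) + r2 * V x →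
      S = r2 * lpl w x + 2 * dr w x + Q * w x →
      ((S - (2 * k * dr w x + (n * k + k1) * w x)) ^ 2
        = S ^ 2 + (2 * k * dr w x + (n * k + k1) * w x) ^ 2 + 4 * k1 * dr w x ^ 2
          + 2 * (n * k1 + k2) * w x * dr w x
          + (4 * k ^ 2 * k1 + 2 * k * (r2 * (2 * V x + dr V x))) * w x ^ 2 + ZX x) ∧
      (q * r2 * gs w x = - q * w x * S + q * Q * w x ^ 2 - q / 2 * w x * dr w x + ZY x) := by
  have cw : ∀ x, ContDiffAt ℝ 1 w x := fun x => (hw.of_le (by norm_cast)).contDiffAt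
  have cdw : ∀ i x, ContDiffAt ℝ 1 (dd i w) x :=
    fun i x => ((contDiff_dd i hw).of_le (by norm_cast)).contDiffAt
  have cdr : ∀ x, ContDiffAt ℝ 1 (dr w) x :=
    fun x => ((contDiff_dr hw).of_le (by norm_cast)).contDiffAt
  have cgs : ∀ x, ContDiffAt ℝ 1 (gs w) x :=
    fun x => ((contDiff_gs hw).of_le (by norm_cast)).contDiffAt
  have cV : ∀ x, ContDiffAt ℝ 1 V x := fun x => (hV.of_le (by norm_num)).contDiffAt
  have cc : ∀ (i : Fin n) x, ContDiffAt ℝ 1 (fun y : Euc n => y i) x := fun i x => by fun_prop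
  have hβ : ContDiff ℝ 1 (fun t => (n : ℝ) * κ t + κ1 t) := (contDiff_const.mul hκ).add hκ1
  have dβ : ∀ t, HasDerivAt (fun t => (n : ℝ) * κ t + κ1 t) (n * κ1 t + κ2 t) t :=
    fun t => ((dκ t).const_mul _).add (dκ1 t)
  have hη : ContDiff ℝ 1 (fun t => κ t ^ 3 + ((n : ℝ) - 1) * κ t) :=
    (hκ.pow 3).add (contDiff_const.mul hκ)
  have dη : ∀ t, HasDerivAt (fun t => κ t ^ 3 + ((n : ℝ) - 1) * κ t)
      (3 * κ t ^ 2 * κ1 t + ((n : ℝ) - 1) * κ1 t) t := fun t => by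
    have := ((dκ t).fun_pow 3).fun_add ((dκ t).const_mul ((n : ℝ) - 1))
    simpa using this
  have N1 := null_div hwc hw0
    (X := fun i y => (κ (Real.log ‖y‖) * ‖y‖ ^ 2) * (dr w y * dd i w y))
    (fun i x h => by simp [dr_zero_of h])
    (fun i x hx => (contDiffAt_rad2 hx hκ).mul ((cdr x).mul (cdw i x)))
  have N2 := null_div hwc hw0
    (X := fun i y => y i * ((κ (Real.log ‖y‖) * ‖y‖ ^ 2) * gs w y))
    (fun i x h => by simp [gs_zero_of h])
    (fun i x hx => (cc i x).mul ((contDiffAt_rad2 hx hκ).mul (cgs x)))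
  have N3 := null_div hwc hw0
    (X := fun i y => (((n : ℝ) * κ (Real.log ‖y‖) + κ1 (Real.log ‖y‖)) * ‖y‖ ^ 2) * (w y * dd i w y))
    (fun i x h => by simp [h.self_of_nhds])
    (fun i x hx => (contDiffAt_rad2 hx hβ).mul ((cw x).mul (cdw i x)))
  have N4 := null_div hwc hw0
    (X := fun i y => y i * (((κ (Real.log ‖y‖) ^ 3 + ((n : ℝ) - 1) * κ (Real.log ‖y‖))
        + (κ (Real.log ‖y‖) * ‖y‖ ^ 2) * V y) * (w y * w y)))
    (fun i x h => by simp [h.self_of_nhds])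
    (fun i x hx => (cc i x).mul (((contDiffAt_radial hx hη).add
      ((contDiffAt_rad2 hx hκ).mul (cV x))).mul ((cw x).mul (cw x))))
  have N5 := null_div hwc hw0
    (X := fun i y => (m (Real.log ‖y‖) * ‖y‖ ^ 2) * (w y * dd i w y))
    (fun i x h => by simp [h.self_of_nhds])
    (fun i x hx => (contDiffAt_rad2 hx hm).mul ((cw x).mul (cdw i x)))
  refine ⟨_, _, (((N1.smul (-4)).add (N2.smul 2)).add (N3.smul (-2))).add (N4.smul (-2)), N5, ?_⟩
  intro x hx k k1 k2 q r2 Q S hk hk1 hk2 hq hr2 hQ hS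
  have hdV : DifferentiableAt ℝ V x := (cV x).differentiableAt (by norm_num)
  have da := (contDiffAt_rad2 hx hκ).differentiableAt (by norm_num)
  have E1 := div1 hw da (fun i => dd_rad2 i hx (dκ _))
  have E2 := div2 hw da (fun i => dd_rad2 i hx (dκ _))
  have E3 := div3 hw ((contDiffAt_rad2 hx hβ).differentiableAt (by norm_num))
    (fun i => dd_rad2 i hx (dβ _))
  have dη' := (contDiffAt_radial hx hη).differentiableAt (by norm_num)
  have E4 := div4 hw (dη'.fun_add (da.fun_mul hdV))
  rw [dr_add dη' (da.fun_mul hdV), dr_mul da hdV, dr_of_rad (fun i => dd_rad2 i hx (dκ _)),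
    dr_of_rad (fun i => dd_radial i hx (dη _))] at E4
  have E5 := div3 hw ((contDiffAt_rad2 hx hm).differentiableAt (by norm_num))
    (fun i => dd_rad2 i hx (dm _))
  have hr : r2 ≠ 0 := by rw [hr2]; simpa using hx
  simp only [← hk, ← hk1, ← hk2, ← hq, ← hr2] at E1 E2 E3 E4 E5
  simp only [E1, E2, E3, E4, E5]
  subst hS hQ
  constructor
  · field_simp
    ring
  · ring

/-! ### The weights -/

/-- The derivative of the basic phase. -/
def mF (τ t : ℝ) : ℝ := τ * Real.exp (t / 2)
/-- A logistic correction. -/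
def sg (τ t : ℝ) : ℝ := Real.exp t / (Real.exp t + τ ^ 2 / 2)
/-- The modified Carleman phase. -/
def ph (τ t : ℝ) : ℝ :=
  2 * τ * (Real.exp (t / 2) - 1) - 11 / 8 * t - 1 / 4 * Real.log (τ * Real.exp t + τ ^ 3 / 2)
/-- The shifted derivative of the phase. -/
def kp (τ t : ℝ) : ℝ := mF τ t - 3 / 8 - 1 / 4 * sg τ t
/-- Derivative of `kp`. -/
def kp1 (τ t : ℝ) : ℝ := mF τ t / 2 - 1 / 4 * (sg τ t * (1 - sg τ t))
/-- Second derivative of `kp`. -/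
def kp2 (τ t : ℝ) : ℝ :=
  mF τ t / 4 - 1 / 4 * (sg τ t * (1 - sg τ t) * (1 - 2 * sg τ t))

lemma mF_deriv (τ t : ℝ) : HasDerivAt (mF τ) (mF τ t / 2) t := by
  unfold mF
  have := (((hasDerivAt_id t).div_const 2).exp).const_mul τ
  refine this.congr_deriv ?_
  simp
  ring

lemma sg_deriv (τ t : ℝ) : HasDerivAt (sg τ) (sg τ t * (1 - sg τ t)) t := by
  unfold sg
  have hp : Real.exp t + τ ^ 2 / 2 ≠ 0 := by positivity
  have := (Real.hasDerivAt_exp t).fun_div ((Real.hasDerivAt_exp t).add_const (τ ^ 2 / 2)) hp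
  refine this.congr_deriv ?_
  field_simp

lemma ph_deriv {τ : ℝ} (hτ : 0 < τ) (t : ℝ) : HasDerivAt (ph τ) (kp τ t - 1) t := by
  have hp : τ * Real.exp t + τ ^ 3 / 2 ≠ 0 := by positivity
  have h1 := ((((hasDerivAt_id t).div_const 2).exp).sub_const 1).const_mul (2 * τ)
  have h2 := (hasDerivAt_id t).const_mul (11 / 8 : ℝ)
  have h3 := ((((Real.hasDerivAt_exp t).const_mul τ).add_const (τ ^ 3 / 2)).log hp).const_mul
    (1 / 4 : ℝ)
  refine ((h1.sub h2).sub h3).congr_deriv ?_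
  unfold kp mF sg
  have hp' : Real.exp t + τ ^ 2 / 2 ≠ 0 := by positivity
  have e : τ * Real.exp t / (τ * Real.exp t + τ ^ 3 / 2)
      = Real.exp t / (Real.exp t + τ ^ 2 / 2) := by
    rw [div_eq_div_iff hp hp']
    ring
  rw [e]
  simp
  ring

lemma kp_deriv (τ t : ℝ) : HasDerivAt (kp τ) (kp1 τ t) t := by
  refine (((mF_deriv τ t).sub_const (3 / 8)).sub ((sg_deriv τ t).const_mul (1 / 4))).congr_deriv ?_
  rfl

lemma kp1_deriv (τ t : ℝ) : HasDerivAt (kp1 τ) (kp2 τ t) t := by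
  have hs := sg_deriv τ t
  refine (((mF_deriv τ t).div_const 2).sub
    ((hs.fun_mul ((hasDerivAt_const t (1 : ℝ)).fun_sub hs)).const_mul (1 / 4))).congr_deriv ?_
  unfold kp2
  ring

lemma mF_cd (τ : ℝ) : ContDiff ℝ (⊤ : ℕ∞) (mF τ) := by
  unfold mF; fun_prop

lemma sg_cd (τ : ℝ) : ContDiff ℝ (⊤ : ℕ∞) (sg τ) := by
  unfold sg
  exact Real.contDiff_exp.div (by fun_prop) (fun t => by positivity)

lemma ph_cd {τ : ℝ} (hτ : 0 < τ) : ContDiff ℝ (⊤ : ℕ∞) (ph τ) := by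
  unfold ph
  refine ContDiff.sub (by fun_prop) (contDiff_const.mul (ContDiff.log (by fun_prop) ?_))
  intro t
  positivity

lemma kp_cd (τ : ℝ) : ContDiff ℝ (⊤ : ℕ∞) (kp τ) := by
  have := mF_cd τ
  have := sg_cd τ
  unfold kp
  fun_prop

lemma kp1_cd (τ : ℝ) : ContDiff ℝ (⊤ : ℕ∞) (kp1 τ) := by
  have := mF_cd τ
  have := sg_cd τ
  unfold kp1
  fun_prop

lemma sg_bds {τ : ℝ} (t : ℝ) : 0 ≤ sg τ t ∧ sg τ t ≤ 1 := by
  unfold sg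
  refine ⟨by positivity, ?_⟩
  rw [div_le_one (by positivity)]
  nlinarith [sq_nonneg τ]

lemma kp_bds {τ t : ℝ} (hm : 2 ≤ mF τ t) :
    mF τ t - 1 ≤ kp τ t ∧ kp τ t ≤ mF τ t ∧ mF τ t / 4 ≤ kp1 τ t ∧ kp1 τ t ≤ mF τ t / 2 ∧
      |kp2 τ t| ≤ mF τ t := by
  obtain ⟨h0, h1⟩ := sg_bds (τ := τ) t
  unfold kp kp1 kp2
  set s := sg τ t
  set m := mF τ t
  have a0 : 0 ≤ s * (1 - s) := mul_nonneg h0 (by linarith)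
  have a1 : s * (1 - s) ≤ 1 := by nlinarith
  have b0 : s * (1 - s) * (1 - 2 * s) ≤ 1 := by nlinarith
  have b1 : -1 ≤ s * (1 - s) * (1 - 2 * s) := by nlinarith
  refine ⟨by linarith, by linarith, by linarith, by linarith, ?_⟩
  rw [abs_le]
  constructor <;> linarith

/-- Relations between the phase and the weights in the statement. -/
lemma weight_rel {n : ℕ} {τ : ℝ} (hτ : 0 < τ) {x : Euc n} (hx : x ≠ 0) :
    Real.exp (4 * τ * (Real.sqrt ‖x‖ - 1)) * rhoSqrt τ x ^ 2
      = Real.exp (ph τ (Real.log ‖x‖)) ^ 2 *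
        (mF τ (Real.log ‖x‖) * ‖x‖ ^ 2 + mF τ (Real.log ‖x‖) ^ 3 / 2) ∧
    Real.exp (4 * τ * (Real.sqrt ‖x‖ - 1)) * (rhoSqrt τ x ^ 2)⁻¹
      = Real.exp (ph τ (Real.log ‖x‖)) ^ 2 * (‖x‖ ^ 2) ^ 2 ∧
    mF τ (Real.log ‖x‖) = τ * Real.sqrt ‖x‖ := by
  have hr : 0 < ‖x‖ := by simpa using hx
  obtain ⟨t, ht⟩ : ∃ t, ‖x‖ = Real.exp t := ⟨Real.log ‖x‖, (Real.exp_log hr).symm⟩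
  have hs : Real.sqrt ‖x‖ = Real.exp (t / 2) := by rw [ht, Real.exp_half]
  have hl : Real.log ‖x‖ = t := by rw [ht, Real.log_exp]
  have hpos : 0 < τ * Real.exp t + τ ^ 3 / 2 := by positivity
  obtain ⟨l, hl'⟩ : ∃ l, τ * Real.exp t + τ ^ 3 / 2 = Real.exp l :=
    ⟨Real.log _, (Real.exp_log hpos).symm⟩
  have hrho : rhoSqrt τ x ^ 2 = Real.exp ((l - 5 / 2 * t) / 2) := by
    unfold rhoSqrt
    have e1 : τ * ‖x‖ ^ (-(3 : ℝ) / 2) + τ ^ 3 / 2 * ‖x‖ ^ (-(5 : ℝ) / 2)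
        = Real.exp (l - 5 / 2 * t) := by
      rw [ht, ← Real.exp_mul, ← Real.exp_mul, sub_eq_add_neg, Real.exp_add, ← hl', add_mul,
        mul_assoc, ← Real.exp_add]
      ring_nf
    rw [e1, ← Real.exp_mul, ← Real.exp_nat_mul]
    congr 1
    push_cast
    ring
  have hph : Real.exp (ph τ t) ^ 2
      = Real.exp (4 * τ * (Real.exp (t / 2) - 1) - 11 / 4 * t - l / 2) := by
    unfold ph
    rw [hl', Real.log_exp, ← Real.exp_nat_mul]
    congr 1
    push_cast
    ring
  have hm : mF τ t * Real.exp t ^ 2 + mF τ t ^ 3 / 2 = Real.exp (l + 3 / 2 * t) := by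
    rw [Real.exp_add, ← hl']
    unfold mF
    have e1 : Real.exp t = Real.exp (t / 2) ^ 2 := by
      rw [← Real.exp_nat_mul]; congr 1; push_cast; ring
    have e2 : Real.exp (3 / 2 * t) = Real.exp (t / 2) ^ 3 := by
      rw [← Real.exp_nat_mul]; congr 1; push_cast; ring
    rw [e1, e2]
    ring
  rw [hl, hs, hrho, hph, ht, hm]
  refine ⟨?_, ?_, ?_⟩
  · rw [← Real.exp_add, ← Real.exp_add]
    congr 1
    ring
  · rw [← Real.exp_neg, ← Real.exp_nat_mul, ← Real.exp_nat_mul, ← Real.exp_add, ← Real.exp_add]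
    congr 1
    push_cast
    ring
  · rfl

/-! ### Conjugation -/

lemma lpl_conj {n : ℕ} {u : Euc n → ℝ} (hu : ContDiff ℝ (⊤ : ℕ∞) u)
    {φ p p1 : ℝ → ℝ} (dφ : ∀ t, HasDerivAt φ (p t) t) (dp : ∀ t, HasDerivAt p (p1 t) t)
    {x : Euc n} (hx : x ≠ 0) {w : Euc n → ℝ}
    (hw : w = fun y => Real.exp (φ (Real.log ‖y‖)) * u y) :
    (∀ i, dd i w x = Real.exp (φ (Real.log ‖x‖)) *
      (dd i u x + p (Real.log ‖x‖) / ‖x‖ ^ 2 * (x i * u x))) ∧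
    dr w x = Real.exp (φ (Real.log ‖x‖)) * (dr u x + p (Real.log ‖x‖) * u x) ∧
    ‖x‖ ^ 2 * lpl w x = Real.exp (φ (Real.log ‖x‖)) *
      (‖x‖ ^ 2 * lpl u x + 2 * p (Real.log ‖x‖) * dr u x
        + (p (Real.log ‖x‖) ^ 2 + p1 (Real.log ‖x‖) + (n - 2) * p (Real.log ‖x‖)) * u x) := by
  have du : ∀ y, DifferentiableAt ℝ u y := fun y => hu.differentiable (by simp) y
  have dE : ∀ t, HasDerivAt (fun t => Real.exp (φ t)) (Real.exp (φ t) * p t) t :=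
    fun t => (dφ t).exp
  have dπ : ∀ t, HasDerivAt (fun t => p t * Real.exp (-2 * t))
      ((p1 t - 2 * p t) * Real.exp (-2 * t)) t := fun t => by
    have h := (dp t).fun_mul (((hasDerivAt_id t).const_mul (-2 : ℝ)).exp)
    refine h.congr_deriv ?_
    simp
    ring
  have hexp : ∀ y : Euc n, y ≠ 0 → Real.exp (-2 * Real.log ‖y‖) = 1 / ‖y‖ ^ 2 := by
    intro y hy
    have hr : 0 < ‖y‖ := by simpa using hy
    rw [neg_mul, Real.exp_neg, ← Real.exp_log (by positivity : 0 < ‖y‖ ^ 2), Real.log_pow]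
    simp
  have first : ∀ i, ∀ y : Euc n, y ≠ 0 → dd i w y = Real.exp (φ (Real.log ‖y‖)) *
      (dd i u y + (p (Real.log ‖y‖) * Real.exp (-2 * Real.log ‖y‖)) * (y i * u y)) := by
    intro i y hy
    rw [hw, dd_mul i (hasFDerivAt_radial hy (dE _)).differentiableAt (du y),
      dd_radial i hy (dE _), hexp y hy]
    ring
  have hx2 : ‖x‖ ^ 2 ≠ 0 := by simpa using hx
  have first' : ∀ i, dd i w x = Real.exp (φ (Real.log ‖x‖)) *
      (dd i u x + p (Real.log ‖x‖) / ‖x‖ ^ 2 * (x i * u x)) := by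
    intro i
    rw [first i x hx, hexp x hx]
    ring
  refine ⟨first', ?_, ?_⟩
  · unfold dr
    simp only [first']
    have : ∀ i, x i * (Real.exp (φ (Real.log ‖x‖)) *
        (dd i u x + p (Real.log ‖x‖) / ‖x‖ ^ 2 * (x i * u x)))
        = Real.exp (φ (Real.log ‖x‖)) * (x i * dd i u x)
          + Real.exp (φ (Real.log ‖x‖)) * p (Real.log ‖x‖) / ‖x‖ ^ 2 * u x * (x i * x i) := by
      intro i; ring
    simp only [this, Finset.sum_add_distrib, ← Finset.mul_sum, sum_coord_sq]
    field_simp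
  · have second : ∀ i, dd i (dd i w) x = Real.exp (φ (Real.log ‖x‖)) *
        (dd i (dd i u) x + 2 * p (Real.log ‖x‖) / ‖x‖ ^ 2 * (x i * dd i u x)
          + p (Real.log ‖x‖) / ‖x‖ ^ 2 * u x
          + (p (Real.log ‖x‖) ^ 2 + p1 (Real.log ‖x‖) - 2 * p (Real.log ‖x‖)) / ‖x‖ ^ 2 / ‖x‖ ^ 2
            * u x * (x i * x i)) := by
      intro i
      have hev : dd i w =ᶠ[𝓝 x] fun y => Real.exp (φ (Real.log ‖y‖)) *
          (dd i u y + (p (Real.log ‖y‖) * Real.exp (-2 * Real.log ‖y‖)) * (y i * u y)) := by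
        filter_upwards [isOpen_ne.mem_nhds hx] with y hy using first i y hy
      have d1 := (hasFDerivAt_radial hx (dE _)).differentiableAt
      have d2 := (hasFDerivAt_radial hx (dπ _)).differentiableAt
      have d3 := (diff_coord i x).fun_mul (du x)
      rw [dd_congr i hev, dd_mul i d1 ((diff_dd i hu x).fun_add (d2.fun_mul d3)),
        dd_add i (diff_dd i hu x) (d2.fun_mul d3), dd_mul i d2 d3,
        dd_mul i (diff_coord i x) (du x), dd_coord, dd_radial i hx (dE _), dd_radial i hx (dπ _),
        hexp x hx]
      simp only [if_true]
      field_simp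
      ring
    unfold lpl
    simp only [second]
    rw [← Finset.mul_sum]
    simp only [Finset.sum_add_distrib, ← Finset.mul_sum, sum_coord_sq]
    unfold dr
    simp
    field_simp
    ring

set_option maxHeartbeats 1600000 in
/-- The pointwise algebraic inequality. -/
lemma pointwise_alg {N M δ K : ℝ} (hN : 0 ≤ N) (hM : 0 ≤ M) (hδ : 0 < δ) (hK : 0 ≤ K) :
    ∃ m0 C : ℝ, 2 ≤ m0 ∧ 0 < C ∧ ∀ m r2 k k1 k2 v D Q S a d g G zx zy : ℝ,
      m0 ≤ m → 1 ≤ r2 → m - 1 ≤ k → k ≤ m → m / 4 ≤ k1 → k1 ≤ m / 2 → |k2| ≤ m → v ≤ M →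
      δ * r2 - K ≤ r2 * (2 * v + D) → Q = k ^ 2 + (N - 1) + r2 * v →
      (G = S ^ 2 + (2 * k * d + (N * k + k1) * a) ^ 2 + 4 * k1 * d ^ 2
          + 2 * (N * k1 + k2) * a * d
          + (4 * k ^ 2 * k1 + 2 * k * (r2 * (2 * v + D))) * a ^ 2 + zx) →
      (m * r2 * g = - m * a * S + m * Q * a ^ 2 - m / 2 * a * d + zy) →
      2 * (m * r2 * g) + 3 * (m * r2 + m ^ 3) * a ^ 2 ≤ C * (G - zx) + 2 * zy := by
  set B := N + 1 with hB
  set L := 7 + 2 * N + 2 * M with hL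
  set c0 := min (1 / 8) δ with hc0
  have hc0p : 0 < c0 := lt_min (by norm_num) hδ
  have hLp : 0 < L := by positivity
  set J := 8 * (2 * K + 4 * B ^ 2) with hJ
  have hJp : 0 ≤ J := by positivity
  refine ⟨2 + J, 1 + L / c0, by linarith, by positivity, ?_⟩
  intro m r2 k k1 k2 v D Q S a d g G zx zy hm hr hk hk' hk1 hk1' hk2 hv hVD hQ hG hg
  have hm2 : 2 ≤ m := by linarith
  have hmp : 0 < m := by linarith
  have hkm : m / 2 ≤ k := by linarith
  have hmJ : J ≤ m ^ 2 := by nlinarith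
  obtain ⟨hk2a, hk2b⟩ := abs_le.mp hk2
  -- lower bound
  have hb : |N * k1 + k2| ≤ B * m := by
    have h1 : 0 ≤ N * k1 := mul_nonneg hN (by linarith)
    have h2 : N * k1 ≤ N * m := mul_le_mul_of_nonneg_left (by linarith) hN
    have h3 : 0 ≤ N * m := by positivity
    have h4 : B * m = N * m + m := by rw [hB]; ring
    rw [abs_le, h4]
    constructor <;> linarith
  have hbad : -(m / 4 * d ^ 2 + 4 * B ^ 2 * m * a ^ 2) ≤ 2 * (N * k1 + k2) * a * d := by
    have h1 : |2 * (N * k1 + k2) * a * d| ≤ 2 * (B * m) * (|a| * |d|) := by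
      rw [abs_mul, abs_mul, abs_mul, abs_two]
      have := mul_le_mul_of_nonneg_right hb (by positivity : 0 ≤ |a| * |d|)
      linarith
    have h2 := (abs_le.mp h1).1
    have h3 : 2 * (B * m) * (|a| * |d|) ≤ m / 4 * d ^ 2 + 4 * B ^ 2 * m * a ^ 2 := by
      have h4 := mul_nonneg hmp.le (sq_nonneg (|d| / 2 - 2 * B * |a|))
      have e3 : m * (|d| / 2 - 2 * B * |a|) ^ 2
          = m / 4 * |d| ^ 2 + 4 * B ^ 2 * m * |a| ^ 2 - 2 * (B * m) * (|a| * |d|) := by ring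
      rw [sq_abs, sq_abs] at e3
      linarith
    linarith
  have hE1 : m ^ 3 / 4 ≤ 4 * k ^ 2 * k1 := by
    have h1 : (m / 2) ^ 2 ≤ k ^ 2 := by gcongr
    have h2 : (m / 2) ^ 2 * (m / 4) ≤ k ^ 2 * k1 := by
      apply mul_le_mul h1 hk1 (by positivity) (by positivity)
    linarith
  have hE2 : m * δ * r2 - 2 * m * K ≤ 2 * k * (r2 * (2 * v + D)) := by
    have h1 := mul_le_mul_of_nonneg_left hVD (by linarith : 0 ≤ 2 * k)
    have h2 : m * (δ * r2) ≤ 2 * k * (δ * r2) :=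
      mul_le_mul_of_nonneg_right (by linarith) (by positivity)
    have h3 : 2 * k * K ≤ 2 * m * K := mul_le_mul_of_nonneg_right (by linarith) hK
    linarith
  have hE3 : (2 * K + 4 * B ^ 2) * m ≤ m ^ 3 / 8 := by
    have := mul_le_mul_of_nonneg_right hmJ hmp.le
    rw [hJ] at this
    linarith
  have hE : c0 * (m * r2 + m ^ 3) ≤
      4 * k ^ 2 * k1 + 2 * k * (r2 * (2 * v + D)) - 4 * B ^ 2 * m := by
    have h1 : c0 * (m * r2) ≤ δ * (m * r2) :=
      mul_le_mul_of_nonneg_right (min_le_right _ _) (by positivity)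
    have h2 : c0 * m ^ 3 ≤ 1 / 8 * m ^ 3 :=
      mul_le_mul_of_nonneg_right (min_le_left _ _) (by positivity)
    linarith
  have hlow : S ^ 2 + 3 / 4 * m * d ^ 2 + c0 * (m * r2 + m ^ 3) * a ^ 2 ≤ G - zx := by
    have h1 := mul_le_mul_of_nonneg_right hE (sq_nonneg a)
    have h2 := mul_le_mul_of_nonneg_right hk1 (sq_nonneg d)
    have h3 := sq_nonneg (2 * k * d + (N * k + k1) * a)
    rw [hG]
    linarith
  -- upper bound
  have hQ' : Q ≤ m ^ 2 + N + M * r2 := by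
    have h1 : k ^ 2 ≤ m ^ 2 := by gcongr; linarith
    have h2 : r2 * v ≤ r2 * M := mul_le_mul_of_nonneg_left hv (by linarith)
    rw [hQ]
    linarith
  have hup : 2 * (m * r2 * g) + 3 * (m * r2 + m ^ 3) * a ^ 2
      ≤ S ^ 2 + m / 2 * d ^ 2 + L * (m * r2 + m ^ 3) * a ^ 2 + 2 * zy := by
    have h1 : m * Q * a ^ 2 ≤ m * (m ^ 2 + N + M * r2) * a ^ 2 := by gcongr
    have h2 : -2 * m * a * S ≤ S ^ 2 + m ^ 2 * a ^ 2 := by linarith [sq_nonneg (S + m * a)]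
    have h3 : -m * a * d ≤ m / 2 * d ^ 2 + m / 2 * a ^ 2 := by
      linarith [mul_nonneg hmp.le (sq_nonneg (a + d))]
    have p1 : m ≤ m ^ 3 := by nlinarith [mul_pos hmp hmp]
    have p2 : m ^ 2 ≤ m ^ 3 := by nlinarith [mul_pos hmp hmp]
    have p3 : 0 ≤ m * r2 := by positivity
    have h4 : m ^ 2 + 2 * (m * (m ^ 2 + N + M * r2)) + m / 2 + 3 * (m * r2 + m ^ 3)
        ≤ L * (m * r2 + m ^ 3) := by
      have q1 := mul_le_mul_of_nonneg_left p1 hN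
      have q2 : 0 ≤ M * m ^ 3 := by positivity
      have q3 : 0 ≤ N * (m * r2) := by positivity
      rw [hL]
      linarith
    have h5 := mul_le_mul_of_nonneg_right h4 (sq_nonneg a)
    rw [hg]
    linarith
  have hfin : (L / c0) * (c0 * (m * r2 + m ^ 3) * a ^ 2) = L * (m * r2 + m ^ 3) * a ^ 2 := by
    field_simp
  have hc1 : 0 ≤ L / c0 := by positivity
  have hge : c0 * (m * r2 + m ^ 3) * a ^ 2 ≤ G - zx := by
    have : 0 ≤ 3 / 4 * m * d ^ 2 := by positivity
    linarith [sq_nonneg S]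
  have h6 := mul_le_mul_of_nonneg_left hge hc1
  have h7 : 0 ≤ c0 * (m * r2 + m ^ 3) * a ^ 2 := by positivity
  have h8 : 0 ≤ m * d ^ 2 := by positivity
  rw [hfin] at h6
  linarith

/-! ### Real-valued estimate modulo divergences -/

lemma fderiv_eq_sum {n : ℕ} {F : Type*} [NormedAddCommGroup F] [NormedSpace ℝ F]
    (T : Euc n →L[ℝ] F) (v : Euc n) :
    T v = ∑ i, v i • T (EuclideanSpace.single i 1) := by
  conv_lhs => rw [← (EuclideanSpace.basisFun (Fin n) ℝ).sum_repr v]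
  simp

lemma dr_eq_fderiv {n : ℕ} (f : Euc n → ℝ) (x : Euc n) : dr f x = fderiv ℝ f x x := by
  rw [fderiv_eq_sum (fderiv ℝ f x) x]
  simp [dr, dd]

lemma potential_bounds {n : ℕ} {V : Euc n → ℝ} {τ0 : ℝ} (hV : SatA1 V τ0)
    (hτ0 : τ0 < 1 / 2) :
    ∃ M δ K : ℝ, 0 ≤ M ∧ 0 < δ ∧ 0 ≤ K ∧ (∀ x, V x ≤ M) ∧
      ∀ x : Euc n, δ * ‖x‖ ^ 2 - K ≤ ‖x‖ ^ 2 * (2 * V x + dr V x) := by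
  obtain ⟨-, ⟨M, hM⟩, ⟨c, hc, hcV⟩, hlim⟩ := hV
  have hM0 : 0 ≤ M := (abs_nonneg _).trans (hM 0).1
  have hDV : ∀ x : Euc n, |dr V x| ≤ M := by
    intro x
    rw [dr_eq_fderiv, ← Real.norm_eq_abs]
    refine ((fderiv ℝ V x).le_opNorm x).trans ?_
    have h1 : ‖x‖ ≤ Real.sqrt (1 + ‖x‖ ^ 2) := Real.le_sqrt_of_sq_le (by linarith)
    calc ‖fderiv ℝ V x‖ * ‖x‖ ≤ ‖fderiv ℝ V x‖ * Real.sqrt (1 + ‖x‖ ^ 2) := by gcongr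
      _ = Real.sqrt (1 + ‖x‖ ^ 2) * ‖fderiv ℝ V x‖ := mul_comm _ _
      _ ≤ M := (hM x).2.1
  have hl : -(1 / 2 : ℝ) <
      Filter.liminf (fun x : Euc n => fderiv ℝ V x x / (4 * V x)) (cocompact (Euc n)) := by
    linarith
  obtain ⟨a, ha1, ha2⟩ := exists_between hl
  have hbdd : IsBoundedUnder (· ≥ ·) (cocompact (Euc n))
      (fun x : Euc n => fderiv ℝ V x x / (4 * V x)) := by
    refine ⟨-(M / (4 * c)), ?_⟩
    rw [eventually_map]
    filter_upwards [hcV] with x hx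
    have h1 : |fderiv ℝ V x x / (4 * V x)| ≤ M / (4 * c) := by
      rw [← dr_eq_fderiv, abs_div, abs_of_pos (by linarith : 0 < 4 * V x)]
      have := hDV x
      gcongr
    exact (abs_le.mp h1).1
  have hev := eventually_lt_of_lt_liminf ha2 hbdd
  have hδ : 0 < (2 + 4 * a) * c := mul_pos (by linarith) hc
  have hev2 : ∀ᶠ x in cocompact (Euc n), (2 + 4 * a) * c ≤ 2 * V x + dr V x := by
    filter_upwards [hev, hcV] with x hx hx2
    have hp : 0 < 4 * V x := by linarith
    rw [lt_div_iff₀ hp, ← dr_eq_fderiv] at hx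
    have : (2 + 4 * a) * c ≤ (2 + 4 * a) * V x :=
      mul_le_mul_of_nonneg_left hx2 (by linarith)
    linarith
  rw [← Metric.cobounded_eq_cocompact, ← comap_norm_atTop, eventually_comap] at hev2
  obtain ⟨R, hR⟩ := eventually_atTop.mp hev2
  refine ⟨M, (2 + 4 * a) * c, ((2 + 4 * a) * c + 3 * M) * R ^ 2, hM0, hδ, by positivity,
    fun x => (abs_le.mp (hM x).1).2, ?_⟩
  intro x
  by_cases hx : R ≤ ‖x‖
  · have h1 := hR ‖x‖ hx x rfl
    have h2 := mul_le_mul_of_nonneg_left h1 (sq_nonneg ‖x‖)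
    have h3 : 0 ≤ ((2 + 4 * a) * c + 3 * M) * R ^ 2 := by positivity
    linarith
  · push Not at hx
    have h1 : ‖x‖ ^ 2 ≤ R ^ 2 := by gcongr
    have h2 : -(3 * M) ≤ 2 * V x + dr V x := by
      have := (abs_le.mp (hM x).1).1
      have := (abs_le.mp (hDV x)).1
      linarith
    have h3 := mul_le_mul_of_nonneg_left h2 (sq_nonneg ‖x‖)
    have h4 := mul_le_mul_of_nonneg_left h1 (by positivity : 0 ≤ (2 + 4 * a) * c + 3 * M)
    linarith

lemma gs_conj {n : ℕ} {u w : Euc n → ℝ} {x : Euc n} (hx : x ≠ 0) {E p : ℝ}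
    (hwu : w x = E * u x)
    (h : ∀ i, dd i w x = E * (dd i u x + p / ‖x‖ ^ 2 * (x i * u x))) :
    E ^ 2 * (‖x‖ ^ 2 * gs u x) ≤ 2 * (‖x‖ ^ 2 * gs w x) + 2 * p ^ 2 * w x ^ 2 := by
  have hx2 : ‖x‖ ^ 2 ≠ 0 := by simpa using hx
  have h1 : E ^ 2 * gs u x ≤ 2 * gs w x + 2 * (p / ‖x‖ ^ 2) ^ 2 * w x ^ 2 * ‖x‖ ^ 2 := by
    unfold gs
    rw [norm_sq_sum x, Finset.mul_sum, Finset.mul_sum, Finset.mul_sum, ← Finset.sum_add_distrib]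
    refine Finset.sum_le_sum fun i _ => ?_
    rw [← norm_sq_sum x]
    have e : E * dd i u x = dd i w x - p / ‖x‖ ^ 2 * w x * x i := by rw [h, hwu]; ring
    have e2 : E ^ 2 * dd i u x ^ 2 = (dd i w x - p / ‖x‖ ^ 2 * w x * x i) ^ 2 := by
      rw [← e]; ring
    rw [e2]
    nlinarith [sq_nonneg (dd i w x + p / ‖x‖ ^ 2 * w x * x i)]
  have h2 := mul_le_mul_of_nonneg_left h1 (sq_nonneg ‖x‖)
  have e : ‖x‖ ^ 2 * (2 * gs w x + 2 * (p / ‖x‖ ^ 2) ^ 2 * w x ^ 2 * ‖x‖ ^ 2)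
      = 2 * (‖x‖ ^ 2 * gs w x) + 2 * p ^ 2 * w x ^ 2 := by
    field_simp
  rw [e] at h2
  linarith

lemma grad_weight {τ s : ℝ} (hτ : 0 < τ) (hs : 0 < s) :
    (s / (τ + s)) ^ 2 * (τ * s * (s ^ 2) ^ 2 + (τ * s) ^ 3 / 2) ≤ τ * s * (s ^ 2) ^ 2 := by
  rw [div_pow, div_mul_eq_mul_div, div_le_iff₀ (by positivity)]
  have e : τ * s * (s ^ 2) ^ 2 * (τ + s) ^ 2 - s ^ 2 * (τ * s * (s ^ 2) ^ 2 + (τ * s) ^ 3 / 2)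
      = τ ^ 3 * s ^ 5 / 2 + 2 * τ ^ 2 * s ^ 6 := by ring
  have : 0 ≤ τ ^ 3 * s ^ 5 / 2 + 2 * τ ^ 2 * s ^ 6 := by positivity
  linarith

set_option maxHeartbeats 1600000 in
lemma real_carleman (n : ℕ) (V : Euc n → ℝ) (τ0 : ℝ)
    (hV : SatA1 V τ0) (hτ0 : τ0 < 1 / 2) :
    ∃ τbar C : ℝ, 1 ≤ τbar ∧ 0 < C ∧ ∀ τ : ℝ, τbar ≤ τ →
      ∀ u : Euc n → ℝ, ContDiff ℝ (⊤ : ℕ∞) u → HasCompactSupport u →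
        (∀ x : Euc n, ‖x‖ ≤ 1 → u x = 0) →
        ∃ Z : Euc n → ℝ, Null Z ∧ ∀ x : Euc n, x ≠ 0 →
          Real.exp (4 * τ * (Real.sqrt ‖x‖ - 1)) * rhoSqrt τ x ^ 2 * u x ^ 2
          + (Real.sqrt ‖x‖ / (τ + Real.sqrt ‖x‖)) ^ 2
              * Real.exp (4 * τ * (Real.sqrt ‖x‖ - 1)) * rhoSqrt τ x ^ 2 * gs u x
          ≤ C * (Real.exp (4 * τ * (Real.sqrt ‖x‖ - 1)) * (rhoSqrt τ x ^ 2)⁻¹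
              * (lpl u x + V x * u x) ^ 2) + Z x := by
  obtain ⟨M, δ, K, hM, hδ, hK, hVM, hVD⟩ := potential_bounds hV hτ0
  obtain ⟨m0, C, hm0, hC, halg⟩ := pointwise_alg (N := (n : ℝ)) (by positivity) hM hδ hK
  refine ⟨m0, C, by linarith, hC, ?_⟩
  intro τ hτ u hu huc hu0
  have hτp : 0 < τ := by linarith
  set w : Euc n → ℝ := fun y => Real.exp (ph τ (Real.log ‖y‖)) * u y with hwdef
  have hw : ContDiff ℝ (⊤ : ℕ∞) w := by
    rw [contDiff_iff_contDiffAt]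
    intro x
    by_cases hx : x = 0
    · have h0 := ev_zero_of_ball hu0 (x := x) (by simp [hx])
      have : w =ᶠ[𝓝 x] fun _ => (0 : ℝ) := by
        filter_upwards [h0] with y hy
        simp [hwdef, hy]
      exact contDiffAt_const.congr_of_eventuallyEq this
    · exact (contDiffAt_radial hx (ph_cd hτp)).exp.mul hu.contDiffAt
  have hwc : HasCompactSupport w := huc.mul_left
  have hw0 : ∀ x : Euc n, ‖x‖ ≤ 1 → w x = 0 := fun x hx => by simp [hwdef, hu0 x hx]
  have c1 : ∀ {f : ℝ → ℝ}, ContDiff ℝ (⊤ : ℕ∞) f → ContDiff ℝ 1 f :=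
    fun h => h.of_le (by norm_cast)
  obtain ⟨ZX, ZY, hZX, hZY, hen⟩ := energy hV.1 hw hwc hw0 (c1 (kp_cd τ)) (c1 (kp1_cd τ))
    (c1 (mF_cd τ)) (kp_deriv τ) (kp1_deriv τ) (mF_deriv τ)
  refine ⟨_, (hZX.smul (-C)).add (hZY.smul 2), ?_⟩
  intro x hx
  have hen' := hen x hx _ _ _ _ _ _ _ rfl rfl rfl rfl rfl rfl rfl
  obtain ⟨I1, I2⟩ := hen'
  by_cases hx1 : ‖x‖ < 1
  · have hu' := ev_zero_of_ball hu0 hx1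
    have hw' := ev_zero_of_ball hw0 hx1
    simp only [hw'.self_of_nhds, dr_zero_of hw', gs_zero_of hw', lpl_zero_of hw'] at I1 I2
    have z1 : ZX x = 0 := by linarith
    have z2 : ZY x = 0 := by linarith
    simp [hu'.self_of_nhds, gs_zero_of hu', lpl_zero_of hu', z1, z2]
  push Not at hx1
  obtain ⟨R1, R2, R3⟩ := weight_rel hτp hx
  have hs1 : 1 ≤ Real.sqrt ‖x‖ := Real.one_le_sqrt.mpr hx1
  have hss : Real.sqrt ‖x‖ ^ 2 = ‖x‖ := Real.sq_sqrt (norm_nonneg x)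
  have hmτ : m0 ≤ mF τ (Real.log ‖x‖) := by
    rw [R3]
    exact hτ.trans (le_mul_of_one_le_right hτp.le hs1)
  have hm2 : 2 ≤ mF τ (Real.log ‖x‖) := by linarith
  obtain ⟨B1, B2, B3, B4, B5⟩ := kp_bds hm2
  have hr2 : 1 ≤ ‖x‖ ^ 2 := one_le_pow₀ hx1
  have key := halg _ _ _ _ _ _ _ _ _ _ _ _ _ _ _ hmτ hr2 B1 B2 B3 B4 B5 (hVM x) (hVD x) rfl
    I1 I2
  have dp : ∀ t, HasDerivAt (fun t => kp τ t - 1) (kp1 τ t) t :=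
    fun t => (kp_deriv τ t).sub_const 1
  obtain ⟨J1, J2, J3⟩ := lpl_conj hu (ph_deriv hτp) dp hx hwdef
  have J4 := gs_conj hx (w := w) rfl J1
  have hGeq : ‖x‖ ^ 2 * lpl w x + 2 * dr w x
        + (kp τ (Real.log ‖x‖) ^ 2 + ((n : ℝ) - 1) + ‖x‖ ^ 2 * V x) * w x
        - (2 * kp τ (Real.log ‖x‖) * dr w x
          + (n * kp τ (Real.log ‖x‖) + kp1 τ (Real.log ‖x‖)) * w x)
      = Real.exp (ph τ (Real.log ‖x‖)) * ‖x‖ ^ 2 * (lpl u x + V x * u x) := by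
    rw [J3, J2, hwdef]
    ring
  rw [hGeq] at key
  have hw2 : w x ^ 2 = Real.exp (ph τ (Real.log ‖x‖)) ^ 2 * u x ^ 2 := by
    rw [hwdef]; ring
  set E := Real.exp (ph τ (Real.log ‖x‖)) with hE
  set m := mF τ (Real.log ‖x‖) with hmdef
  set k := kp τ (Real.log ‖x‖) with hkdef
  have hgw : (Real.sqrt ‖x‖ / (τ + Real.sqrt ‖x‖)) ^ 2 * (m * ‖x‖ ^ 2 + m ^ 3 / 2)
      ≤ m * ‖x‖ ^ 2 := by
    have := grad_weight hτp (by linarith : 0 < Real.sqrt ‖x‖)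
    rw [hss] at this
    rw [R3]
    exact this
  have hgsn : 0 ≤ gs u x := Finset.sum_nonneg fun i _ => sq_nonneg _
  have hmp : 0 < m := by linarith
  have T2 : (Real.sqrt ‖x‖ / (τ + Real.sqrt ‖x‖)) ^ 2
      * Real.exp (4 * τ * (Real.sqrt ‖x‖ - 1)) * rhoSqrt τ x ^ 2 * gs u x
      ≤ m * (E ^ 2 * (‖x‖ ^ 2 * gs u x)) := by
    rw [mul_assoc ((Real.sqrt ‖x‖ / (τ + Real.sqrt ‖x‖)) ^ 2), R1]
    have := mul_le_mul_of_nonneg_right hgw (by positivity : 0 ≤ E ^ 2 * gs u x)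
    linarith
  have T3 := mul_le_mul_of_nonneg_left J4 hmp.le
  have hk2 : (k - 1) ^ 2 ≤ m ^ 2 := sq_le_sq' (by linarith) (by linarith)
  have T4 : m * (k - 1) ^ 2 * w x ^ 2 ≤ m * m ^ 2 * w x ^ 2 := by gcongr
  have T5 : 0 ≤ m ^ 3 * w x ^ 2 := by positivity
  have T6 : 0 ≤ m * ‖x‖ ^ 2 * w x ^ 2 := by positivity
  rw [R2]
  have T1 : Real.exp (4 * τ * (Real.sqrt ‖x‖ - 1)) * rhoSqrt τ x ^ 2 * u x ^ 2
      = (m * ‖x‖ ^ 2 + m ^ 3 / 2) * w x ^ 2 := by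
    rw [R1, hw2]; ring
  rw [T1]
  linarith

/-! ### Complex-valued functions -/

lemma dd_re {n : ℕ} (i : Fin n) {u : Euc n → ℂ} {x : Euc n} (h : DifferentiableAt ℝ u x) :
    dd i (fun y => (u y).re) x = (pd i u x).re := by
  unfold dd pd
  have := (Complex.reCLM.hasFDerivAt (x := u x)).comp x h.hasFDerivAt
  have e : fderiv ℝ (fun y => (u y).re) x = Complex.reCLM.comp (fderiv ℝ u x) := this.fderiv
  rw [e]
  simp

lemma dd_im {n : ℕ} (i : Fin n) {u : Euc n → ℂ} {x : Euc n} (h : DifferentiableAt ℝ u x) :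
    dd i (fun y => (u y).im) x = (pd i u x).im := by
  unfold dd pd
  have := (Complex.imCLM.hasFDerivAt (x := u x)).comp x h.hasFDerivAt
  have e : fderiv ℝ (fun y => (u y).im) x = Complex.imCLM.comp (fderiv ℝ u x) := this.fderiv
  rw [e]
  simp

lemma contDiff_pd {n : ℕ} (i : Fin n) {u : Euc n → ℂ} (hu : ContDiff ℝ (⊤ : ℕ∞) u) :
    ContDiff ℝ (⊤ : ℕ∞) (pd i u) := by
  unfold pd
  exact (hu.fderiv_right (m := (⊤ : ℕ∞)) (by norm_cast)).clm_apply contDiff_const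

lemma lpl_re {n : ℕ} {u : Euc n → ℂ} (hu : ContDiff ℝ (⊤ : ℕ∞) u) (x : Euc n) :
    lpl (fun y => (u y).re) x = (lap u x).re := by
  unfold lpl lap
  rw [Complex.re_sum]
  refine Finset.sum_congr rfl fun i _ => ?_
  have : dd i (fun y => (u y).re) = fun y => (pd i u y).re := by
    funext y
    exact dd_re i (hu.differentiable (by simp) y)
  rw [this, dd_re i ((contDiff_pd i hu).differentiable (by simp) x)]

lemma lpl_im {n : ℕ} {u : Euc n → ℂ} (hu : ContDiff ℝ (⊤ : ℕ∞) u) (x : Euc n) :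
    lpl (fun y => (u y).im) x = (lap u x).im := by
  unfold lpl lap
  rw [Complex.im_sum]
  refine Finset.sum_congr rfl fun i _ => ?_
  have : dd i (fun y => (u y).im) = fun y => (pd i u y).im := by
    funext y
    exact dd_im i (hu.differentiable (by simp) y)
  rw [this, dd_im i ((contDiff_pd i hu).differentiable (by simp) x)]

lemma norm_sq_re_im (z : ℂ) : ‖z‖ ^ 2 = z.re ^ 2 + z.im ^ 2 := by
  rw [Complex.sq_norm, Complex.normSq_apply]
  ring

lemma fderiv_norm_le {n : ℕ} {u : Euc n → ℂ} (hu : ContDiff ℝ (⊤ : ℕ∞) u) (x : Euc n) :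
    ‖fderiv ℝ u x‖ ^ 2 ≤ gs (fun y => (u y).re) x + gs (fun y => (u y).im) x := by
  have hd := hu.differentiable (by simp) x
  have e : gs (fun y => (u y).re) x + gs (fun y => (u y).im) x = ∑ i, ‖pd i u x‖ ^ 2 := by
    unfold gs
    rw [← Finset.sum_add_distrib]
    refine Finset.sum_congr rfl fun i _ => ?_
    rw [dd_re i hd, dd_im i hd, norm_sq_re_im]
  rw [e]
  have h0 : 0 ≤ ∑ i, ‖pd i u x‖ ^ 2 := Finset.sum_nonneg fun i _ => sq_nonneg _
  have h1 : ‖fderiv ℝ u x‖ ≤ Real.sqrt (∑ i, ‖pd i u x‖ ^ 2) := by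
    refine ContinuousLinearMap.opNorm_le_bound _ (Real.sqrt_nonneg _) fun v => ?_
    rw [fderiv_eq_sum (fderiv ℝ u x) v]
    refine (norm_sum_le _ _).trans ?_
    have h2 : ∑ i, ‖v i • fderiv ℝ u x (EuclideanSpace.single i 1)‖
        = ∑ i, ‖pd i u x‖ * |v i| := by
      refine Finset.sum_congr rfl fun i _ => ?_
      rw [norm_smul, Real.norm_eq_abs, mul_comm]
      rfl
    rw [h2]
    have h3 := Real.sum_mul_le_sqrt_mul_sqrt Finset.univ (fun i => ‖pd i u x‖) (fun i => |v i|)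
    have h4 : Real.sqrt (∑ i, |v i| ^ 2) = ‖v‖ := by
      simp only [sq_abs]
      rw [← norm_sq_sum, Real.sqrt_sq (norm_nonneg v)]
    rw [h4] at h3
    exact h3
  calc ‖fderiv ℝ u x‖ ^ 2 ≤ Real.sqrt (∑ i, ‖pd i u x‖ ^ 2) ^ 2 := by gcongr
    _ = _ := Real.sq_sqrt h0

/-- From a pointwise bound modulo a null function to the integral bound. -/
lemma lintegral_of_pointwise {n : ℕ} (hn : 2 ≤ n) {C : ℝ} (hC : 0 < C)
    {f g h Z : Euc n → ℝ} (hf : Measurable f) (hh : Measurable h)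
    (hf0 : ∀ x, 0 ≤ f x) (hg0 : ∀ x, 0 ≤ g x) (hh0 : ∀ x, 0 ≤ h x)
    (hZ : Null Z) (hle : ∀ x, x ≠ 0 → f x + g x ≤ C * h x + Z x) :
    (∫⁻ x, ENNReal.ofReal (f x)) + (∫⁻ x, ENNReal.ofReal (g x))
      ≤ ENNReal.ofReal C * ∫⁻ x, ENNReal.ofReal (h x) := by
  have : Nonempty (Fin n) := ⟨⟨0, by omega⟩⟩
  have : Nontrivial (Euc n) := inferInstance
  by_cases hfin : ∫⁻ x, ENNReal.ofReal (h x) = ⊤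
  · rw [hfin, ENNReal.mul_top (by simpa using hC)]
    exact le_top
  have hi : Integrable h := by
    refine ⟨hh.aestronglyMeasurable, ?_⟩
    rw [hasFiniteIntegral_iff_ofReal (Eventually.of_forall hh0)]
    exact lt_top_iff_ne_top.mpr hfin
  have hae : ∀ᵐ x : Euc n, x ≠ 0 := by
    rw [ae_iff]
    simp
  rw [← lintegral_add_left hf.ennreal_ofReal]
  have hi2 : Integrable (fun x => C * h x + Z x) := (hi.const_mul C).add hZ.1
  calc ∫⁻ x, (ENNReal.ofReal (f x) + ENNReal.ofReal (g x))
      ≤ ∫⁻ x, ENNReal.ofReal (C * h x + Z x) := by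
        refine lintegral_mono_ae ?_
        filter_upwards [hae] with x hx
        rw [← ENNReal.ofReal_add (hf0 x) (hg0 x)]
        exact ENNReal.ofReal_le_ofReal (hle x hx)
    _ = ENNReal.ofReal (∫ x, (C * h x + Z x)) := by
        rw [ofReal_integral_eq_lintegral_ofReal hi2]
        filter_upwards [hae] with x hx
        exact (add_nonneg (hf0 x) (hg0 x)).trans (hle x hx)
    _ = ENNReal.ofReal (C * ∫ x, h x) := by
        rw [integral_add (hi.const_mul C) hZ.1, hZ.2, add_zero, integral_const_mul]
    _ = ENNReal.ofReal C * ∫⁻ x, ENNReal.ofReal (h x) := by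
        rw [ENNReal.ofReal_mul hC.le,
          ofReal_integral_eq_lintegral_ofReal hi (Eventually.of_forall hh0)]

/-- The `L²` Carleman estimate with the weight `e^{τ√|x|}` (the `ε → 0`
endpoint of the family of the paper's weights). -/
theorem L2_carleman_estimate_sqrt_weight
    (n : ℕ) (hn : 2 ≤ n) (V : Euc n → ℝ) (τ0 : ℝ)
    (hV : SatA1 V τ0) (hτ0 : τ0 < 1 / 2) :
    ∃ τbar : ℝ, 1 ≤ τbar ∧
      ∃ C : ℝ, 0 < C ∧
        ∀ τ : ℝ, τbar ≤ τ →
          ∀ u : Euc n → ℂ, ContDiff ℝ (⊤ : ℕ∞) u → HasCompactSupport u →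
            (∀ x : Euc n, ‖x‖ ≤ 1 → u x = 0) →
            (∫⁻ x : Euc n, ENNReal.ofReal
                (Real.exp (4 * τ * (Real.sqrt ‖x‖ - 1))
                  * rhoSqrt τ x ^ 2 * ‖u x‖ ^ 2))
            + (∫⁻ x : Euc n, ENNReal.ofReal
                ((Real.sqrt ‖x‖ / (τ + Real.sqrt ‖x‖)) ^ 2
                  * Real.exp (4 * τ * (Real.sqrt ‖x‖ - 1))
                  * rhoSqrt τ x ^ 2 * ‖fderiv ℝ u x‖ ^ 2))
            ≤ ENNReal.ofReal C * ∫⁻ x : Euc n, ENNReal.ofReal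
                (Real.exp (4 * τ * (Real.sqrt ‖x‖ - 1))
                  * (rhoSqrt τ x ^ 2)⁻¹
                  * ‖lap u x + (V x : ℂ) * u x‖ ^ 2) := by
  obtain ⟨τbar, C, h1, hC, hmain⟩ := real_carleman n V τ0 hV hτ0
  refine ⟨τbar, h1, C, hC, ?_⟩
  intro τ hτ u hu huc hu0
  have hre : ContDiff ℝ (⊤ : ℕ∞) (fun y => (u y).re) := Complex.reCLM.contDiff.comp hu
  have him : ContDiff ℝ (⊤ : ℕ∞) (fun y => (u y).im) := Complex.imCLM.contDiff.comp hu
  have hrec : HasCompactSupport (fun y => (u y).re) :=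
    huc.comp_left (g := Complex.re) Complex.zero_re
  have himc : HasCompactSupport (fun y => (u y).im) :=
    huc.comp_left (g := Complex.im) Complex.zero_im
  obtain ⟨Z1, hZ1, H1⟩ := hmain τ hτ _ hre hrec (fun x hx => by simp [hu0 x hx])
  obtain ⟨Z2, hZ2, H2⟩ := hmain τ hτ _ him himc (fun x hx => by simp [hu0 x hx])
  have hrho : Measurable (rhoSqrt τ : Euc n → ℝ) := by
    unfold rhoSqrt
    fun_prop
  have hlapc : Continuous (lap u) := by
    unfold lap
    exact continuous_finsetSum _ fun i _ => (contDiff_pd i (contDiff_pd i hu)).continuous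
  have hlap : Measurable (lap u) := hlapc.measurable
  have hVm : Measurable V := hV.1.continuous.measurable
  have hum : Measurable u := hu.continuous.measurable
  have hexp : Measurable (fun x : Euc n => Real.exp (4 * τ * (Real.sqrt ‖x‖ - 1))) := by
    fun_prop
  have hpot : Measurable (fun x : Euc n => ‖lap u x + (V x : ℂ) * u x‖ ^ 2) :=
    (hlap.add ((Complex.measurable_ofReal.comp hVm).mul hum)).norm.pow_const 2
  refine lintegral_of_pointwise hn hC ((hexp.mul (hrho.pow_const 2)).mul (hum.norm.pow_const 2))
    ((hexp.mul (hrho.pow_const 2).inv).mul hpot)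
    (fun x => by positivity) (fun x => by positivity) (fun x => by positivity)
    (hZ1.add hZ2) ?_
  intro x hx
  have A1 := H1 x hx
  have A2 := H2 x hx
  rw [lpl_re hu] at A1
  rw [lpl_im hu] at A2
  have e1 : ‖lap u x + (V x : ℂ) * u x‖ ^ 2
      = ((lap u x).re + V x * (u x).re) ^ 2 + ((lap u x).im + V x * (u x).im) ^ 2 := by
    rw [norm_sq_re_im]
    simp
  have hg := mul_le_mul_of_nonneg_left (fderiv_norm_le hu x)
    (by positivity : 0 ≤ (Real.sqrt ‖x‖ / (τ + Real.sqrt ‖x‖)) ^ 2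
      * Real.exp (4 * τ * (Real.sqrt ‖x‖ - 1)) * rhoSqrt τ x ^ 2)
  rw [e1, norm_sq_re_im (u x)]
  linarith
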